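/- Let 𝓛 > 0, let ρ : ℝ^d → ℝ be a nonnegative bounded measurable 𝓛-periodic function and v : ℝ^d → ℝ^d a bounded measurable 𝓛-periodic vector field. Let p ∈ [3,∞), σ ∈ (0,1], 0 < δ ≤ ℓ, and constants A, B, L, M > 0. Suppose that ‖δρ(r;·)‖_p ≤ B |r|/L and ‖δv(r;·)‖_p ≤ A (|r|/L)^σ for all |r| ≤ δ, and that ρ̄_ℓ(x) ≥ 1/M for almost every x. Define the high-pass fields ρ'_δ := ρ − ρ̄_δ and v'_δ := v − v̄_δ, and the ultraviolet flux contribution Z_ℓ := −(ħ²/(4m² ρ̄_ℓ)) (∇Δ \overline{(ρ'_δ)}_ℓ) · τ̄_ℓ(ρ'_δ, v'_δ). Then there exists a constant C, depending only on G and d, such that ‖Z_ℓ‖_{p/3} ≤ C (ħ²/m²) M A B² ℓ^{−3} (δ/L)^{2+σ}; in particular, for fixed ℓ the contribution of scales δ ≪ ℓ decays at least as fast as (δ/ℓ)^{2+σ}. -/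

import Mathlib

/-!
The flux is pointwise at most `(ħ²/4m²) M` times `|∇Δ f̄_ℓ|` times `|τ̄_ℓ(f, g)|`, where `f = ρ'_δ`
and `g = v'_δ`, so Hölder with `3/p = 1/p + 2/p` leaves three estimates.

* High-pass fields are averages of increments, `f(x) = -∫ G_δ(r) δρ(r;x) dr`, and `G_δ` lives on
  `|r| < δ`. Minkowski's integral inequality gives `‖f‖_p ≤ B δ/L` and `‖g‖_p ≤ A (δ/L)^σ`
  (`lpE_highPass_le`).
* `f̄_ℓ` is a convolution of `f` with a smooth kernel, so `∇Δ` falls on the kernel and costs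
  `ℓ^{-3}` by scaling (`enorm_gradient_lap_cg_le`, `lintegral_fderiv_lap_reflResc`).
* `|τ̄_ℓ(f, g)|` is at most the average of `|f||g|` plus the product of the averages of `|f|`
  and `|g|`, hence of `L^{p/2}` norm at most `2 ‖f‖_p ‖g‖_p` (`enorm_tauV_le`).

The last two use that averaging is bounded on `L^p` of the periodic box (`lpE_avg_le`), i.e. that
integrals of periodic functions over the box are translation invariant (`lintegral_box_translate`).
All norms are handled as `lintegral`s of `[0, ∞]`-valued majorants, so that measurability is only
needed for the majorants.
-/

open MeasureTheory Metric
open scoped RealInnerProductSpace ENNReal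

noncomputable section

abbrev Euc (d : ℕ) := EuclideanSpace ℝ (Fin d)

namespace QT

variable {d : ℕ}

/-- `G` is a mollifier: smooth, nonnegative, supported in the open unit ball, integral one. -/
structure IsMollifier {d : ℕ} (G : Euc d → ℝ) : Prop where
  smooth : ContDiff ℝ (⊤ : ℕ∞) G
  nonneg : ∀ r, 0 ≤ G r
  supp : tsupport G ⊆ ball (0 : Euc d) 1
  integral_one : ∫ r, G r = 1

/-- The rescaled mollifier `G_ℓ(r) = ℓ^{-d} G(r/ℓ)`. -/
def resc (G : Euc d → ℝ) (ℓ : ℝ) (r : Euc d) : ℝ := (ℓ ^ d)⁻¹ * G (ℓ⁻¹ • r)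

/-- Coarse-grained field `ā_ℓ(x) = ∫ G_ℓ(r) a(x+r) dr`. -/
def cg {E : Type*} [NormedAddCommGroup E] [NormedSpace ℝ E]
    (G : Euc d → ℝ) (ℓ : ℝ) (a : Euc d → E) (x : Euc d) : E :=
  ∫ r, resc G ℓ r • a (x + r)

/-- Increment `δa(r;x) = a(x+r) - a(x)`. -/
def incr {E : Type*} [NormedAddCommGroup E] (a : Euc d → E) (r x : Euc d) : E :=
  a (x + r) - a x

/-- `δa(ℓ;x) = sup_{|r|<ℓ} |δa(r;x)|`. -/
def supIncr {E : Type*} [NormedAddCommGroup E] (a : Euc d → E) (ℓ : ℝ) (x : Euc d) : ℝ :=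
  ⨆ r ∈ ball (0 : Euc d) ℓ, ‖incr a r x‖

/-- Second-order coarse-graining cumulant `τ̄_ℓ(f,g)`. -/
def tau2 (G : Euc d → ℝ) (ℓ : ℝ) (f g : Euc d → ℝ) (x : Euc d) : ℝ :=
  cg G ℓ (fun y => f y * g y) x - cg G ℓ f x * cg G ℓ g x

/-- `τ̄_ℓ(ρ, v)` for a scalar density and a vector field. -/
def tauV (G : Euc d → ℝ) (ℓ : ℝ) (ρ : Euc d → ℝ) (v : Euc d → Euc d) (x : Euc d) : Euc d :=
  cg G ℓ (fun y => ρ y • v y) x - cg G ℓ ρ x • cg G ℓ v x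

/-- `i`-th standard basis vector. -/
def e (d : ℕ) (i : Fin d) : Euc d := EuclideanSpace.single i (1 : ℝ)

/-- Partial derivative `∂_i f(x)`. -/
def pd (i : Fin d) (f : Euc d → ℝ) (x : Euc d) : ℝ := fderiv ℝ f x (e d i)

/-- Laplacian. -/
def lap (f : Euc d → ℝ) (x : Euc d) : ℝ := ∑ i, pd i (fun y => pd i f y) x

/-- Gradient matrix `(∇v)_{ij} = ∂_i v_j`. -/
def gradMat (v : Euc d → Euc d) (x : Euc d) : Matrix (Fin d) (Fin d) ℝ :=
  Matrix.of fun i j => pd i (fun y => v y j) x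

/-- Frobenius norm of a matrix. -/
def frobNorm (A : Matrix (Fin d) (Fin d) ℝ) : ℝ := Real.sqrt (∑ i, ∑ j, A i j ^ 2)

/-- Frobenius inner product `A : B`. -/
def frobInner (A B : Matrix (Fin d) (Fin d) ℝ) : ℝ := ∑ i, ∑ j, A i j * B i j

/-- Favre-averaged velocity `ṽ_ℓ = \overline{(ρv)}_ℓ/ρ̄_ℓ` where `ρ̄_ℓ > 0`, `0` otherwise. -/
def favre (G : Euc d → ℝ) (ℓ : ℝ) (ρ : Euc d → ℝ) (v : Euc d → Euc d) (x : Euc d) : Euc d :=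
  if 0 < cg G ℓ ρ x then (cg G ℓ ρ x)⁻¹ • cg G ℓ (fun y => ρ y • v y) x else 0

/-- Favre stress `τ̃_ℓ(v,v) = \overline{(ρ v⊗v)}_ℓ/ρ̄_ℓ − ṽ_ℓ ⊗ ṽ_ℓ`. -/
def favreStress (G : Euc d → ℝ) (ℓ : ℝ) (ρ : Euc d → ℝ) (v : Euc d → Euc d) (x : Euc d) :
    Matrix (Fin d) (Fin d) ℝ :=
  Matrix.of fun i j =>
    (cg G ℓ ρ x)⁻¹ * cg G ℓ (fun y => ρ y * (v y i * v y j)) x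
      - favre G ℓ ρ v x i * favre G ℓ ρ v x j

/-- Deformation work `Π_ℓ = −ρ̄_ℓ ∇ṽ_ℓ : τ̃_ℓ(v,v)`. -/
def deformWork (G : Euc d → ℝ) (ℓ : ℝ) (ρ : Euc d → ℝ) (v : Euc d → Euc d) (x : Euc d) : ℝ :=
  -(cg G ℓ ρ x * frobInner (gradMat (favre G ℓ ρ v) x) (favreStress G ℓ ρ v x))

/-- The periodic box `[0,𝓛]^d`. -/
def box (d : ℕ) (L : ℝ) : Set (Euc d) := {x | ∀ i, x i ∈ Set.Icc (0 : ℝ) L}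

/-- Normalized measure on the periodic box, so that `eLpNorm · p (boxMeasure d 𝓛)`
is the normalized `L^p` norm `(𝓛^{-d}∫_{[0,𝓛]^d}|f|^p)^{1/p}` (ess-sup for `p = ∞`). -/
def boxMeasure (d : ℕ) (L : ℝ) : Measure (Euc d) :=
  (ENNReal.ofReal (L ^ d))⁻¹ • (volume.restrict (box d L))

/-- `𝓛`-periodicity in each coordinate. -/
def PeriodicF {E : Type*} (L : ℝ) (f : Euc d → E) : Prop :=
  ∀ (x : Euc d) (i : Fin d), f (x + EuclideanSpace.single i L) = f x

/-- Quantum stress `Σ = (ħ²/4m²)(Δρ)I − (ħ²/m²)∇√ρ ⊗ ∇√ρ`. -/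
def qStress (hb m : ℝ) (ρ : Euc d → ℝ) (x : Euc d) : Matrix (Fin d) (Fin d) ℝ :=
  Matrix.of fun i j =>
    (hb ^ 2 / (4 * m ^ 2)) * lap ρ x * (if i = j then (1 : ℝ) else 0)
      - (hb ^ 2 / m ^ 2) * (gradient (fun y => Real.sqrt (ρ y)) x i
          * gradient (fun y => Real.sqrt (ρ y)) x j)

/-- Coarse-grained quantum stress `Σ̄_ℓ`. -/
def cgStress (G : Euc d → ℝ) (ℓ hb m : ℝ) (ρ : Euc d → ℝ) (x : Euc d) :
    Matrix (Fin d) (Fin d) ℝ :=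
  Matrix.of fun i j => cg G ℓ (fun z => qStress hb m ρ z i j) x

/-- Row-wise divergence of the coarse-grained quantum stress, `(∇·Σ̄_ℓ)_j = ∑_i ∂_i (Σ̄_ℓ)_{ij}`. -/
def divCgStress (G : Euc d → ℝ) (ℓ hb m : ℝ) (ρ : Euc d → ℝ) (x : Euc d) : Euc d :=
  (EuclideanSpace.equiv (Fin d) ℝ).symm
    (fun j => ∑ i, pd i (fun y => cgStress G ℓ hb m ρ y i j) x)

/-- Quantum baropycnal work `Λ^{(Σ)}_ℓ = −(1/ρ̄_ℓ)(∇·Σ̄_ℓ)·τ̄_ℓ(ρ,v)`. -/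
def qBaroWork (G : Euc d → ℝ) (ℓ hb m : ℝ) (ρ : Euc d → ℝ) (v : Euc d → Euc d) (x : Euc d) : ℝ :=
  -((cg G ℓ ρ x)⁻¹ * ⟪divCgStress G ℓ hb m ρ x, tauV G ℓ ρ v x⟫)

end QT

namespace QT

/-- High-pass (residual) field `a'_δ := a − ā_δ`. -/
def highPass {E : Type*} [NormedAddCommGroup E] [NormedSpace ℝ E]
    (G : Euc d → ℝ) (δ : ℝ) (a : Euc d → E) : Euc d → E :=
  fun x => a x - cg G δ a x

/-- Ultraviolet flux contribution
`Z_ℓ = −(ħ²/(4m² ρ̄_ℓ)) (∇Δ \overline{(ρ'_δ)}_ℓ) · τ̄_ℓ(ρ'_δ, v'_δ)`. -/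
def uvFlux (G : Euc d → ℝ) (ℓ δ hb m : ℝ) (ρ : Euc d → ℝ) (v : Euc d → Euc d)
    (x : Euc d) : ℝ :=
  -((hb ^ 2 / (4 * m ^ 2)) * (cg G ℓ ρ x)⁻¹ *
    ⟪gradient (fun y => lap (cg G ℓ (highPass G δ ρ)) y) x,
      tauV G ℓ (highPass G δ ρ) (highPass G δ v) x⟫)

end QT

namespace QT

variable {d : ℕ}

/-! ### Lebesgue seminorms of nonnegative functions and Minkowski's inequality -/

/-- The `L^p(μ)` norm of an extended nonnegative function, `(∫ φ^p dμ)^{1/p}`, for real `p`. -/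
def lpE {α : Type*} [MeasurableSpace α] (μ : Measure α) (p : ℝ) (φ : α → ℝ≥0∞) : ℝ≥0∞ :=
  (∫⁻ x, φ x ^ p ∂μ) ^ (1 / p)

/-- The average `x ↦ ∫ K(r) φ(x + r) dr` of a nonnegative function against a nonnegative kernel,
not assumed to have mass one. -/
def avg (K φ : Euc d → ℝ≥0∞) (x : Euc d) : ℝ≥0∞ := ∫⁻ r, K r * φ (x + r)

lemma eLpNorm_eq_lpE {α E : Type*} [MeasurableSpace α] [NormedAddCommGroup E] (μ : Measure α)
    {p : ℝ} (hp : 0 < p) (f : α → E) :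
    eLpNorm f (ENNReal.ofReal p) μ = lpE μ p (fun x => ‖f x‖ₑ) := by
  rw [eLpNorm_eq_lintegral_rpow_enorm_toReal (by simpa using hp) (by simp),
    ENNReal.toReal_ofReal hp.le, lpE]

lemma lpE_mono_ae {α : Type*} [MeasurableSpace α] {μ : Measure α} {p : ℝ} (hp : 0 < p)
    {φ ψ : α → ℝ≥0∞} (h : ∀ᵐ x ∂μ, φ x ≤ ψ x) : lpE μ p φ ≤ lpE μ p ψ := by
  unfold lpE
  gcongr ?_ ^ _
  apply lintegral_mono_ae
  filter_upwards [h] with x hx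
  gcongr

lemma lpE_const_mul {α : Type*} [MeasurableSpace α] (μ : Measure α) {p : ℝ} (hp : 0 < p)
    (c : ℝ≥0∞) {φ : α → ℝ≥0∞} (hφ : Measurable φ) :
    lpE μ p (fun x => c * φ x) = c * lpE μ p φ := by
  unfold lpE
  simp_rw [ENNReal.mul_rpow_of_nonneg _ _ hp.le]
  rw [lintegral_const_mul _ (by fun_prop), ENNReal.mul_rpow_of_nonneg _ _ (by positivity),
    ← ENNReal.rpow_mul, mul_one_div_cancel hp.ne', ENNReal.rpow_one]

/-- Minkowski's integral inequality for a family that is uniformly bounded in `L^p`. It follows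
from Hölder in `r`, `(∫ h dν)^p ≤ ν(univ)^{p-1} ∫ h^p dν`, and Tonelli. -/
lemma lpE_lintegral_le {α β : Type*} [MeasurableSpace α] [MeasurableSpace β] (μ : Measure α)
    [SFinite μ] (ν : Measure β) [SFinite ν] {p : ℝ} (hp : 1 < p) {h : β → α → ℝ≥0∞}
    (hm : Measurable (Function.uncurry h)) {c : ℝ≥0∞} (hc : ∀ᵐ r ∂ν, lpE μ p (h r) ≤ c) :
    lpE μ p (fun x => ∫⁻ r, h r x ∂ν) ≤ ν Set.univ * c := by
  have hp0 : 0 < p := by linarith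
  have hpq := Real.HolderConjugate.conjExponent hp
  set q := p.conjExponent
  have hq0 : 0 < q := hpq.symm.pos
  have hpw : ∀ x, (∫⁻ r, h r x ∂ν) ^ p ≤ (ν Set.univ) ^ (p / q) * ∫⁻ r, h r x ^ p ∂ν := by
    intro x
    have h1 := ENNReal.lintegral_mul_le_Lp_mul_Lq ν hpq (f := fun r => h r x) (g := fun _ => 1)
      (by fun_prop) (by fun_prop)
    simp only [Pi.mul_apply, mul_one, ENNReal.one_rpow, lintegral_const, one_mul] at h1
    calc _ ≤ _ := ENNReal.rpow_le_rpow h1 hp0.le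
      _ = _ := by
        rw [ENNReal.mul_rpow_of_nonneg _ _ hp0.le, ← ENNReal.rpow_mul, ← ENNReal.rpow_mul,
          one_div_mul_cancel hp0.ne', ENNReal.rpow_one, mul_comm]
        congr 2
        ring
  have hr : ∀ᵐ r ∂ν, ∫⁻ x, h r x ^ p ∂μ ≤ c ^ p := by
    filter_upwards [hc] with r hr
    have := ENNReal.rpow_le_rpow hr hp0.le
    rwa [lpE, ← ENNReal.rpow_mul, one_div_mul_cancel hp0.ne', ENNReal.rpow_one] at this
  have key : ∫⁻ x, (∫⁻ r, h r x ∂ν) ^ p ∂μ ≤ (ν Set.univ * c) ^ p := by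
    calc _ ≤ ∫⁻ x, (ν Set.univ) ^ (p / q) * ∫⁻ r, h r x ^ p ∂ν ∂μ := lintegral_mono hpw
      _ = (ν Set.univ) ^ (p / q) * ∫⁻ r, ∫⁻ x, h r x ^ p ∂μ ∂ν := by
        have hm' : Measurable (Function.uncurry fun x r => h r x ^ p) := by
          have : Measurable fun z : α × β => h z.2 z.1 := hm.comp measurable_swap
          exact this.pow_const p
        rw [lintegral_const_mul _ hm'.lintegral_prod_right, lintegral_lintegral_swap hm'.aemeasurable]
      _ ≤ (ν Set.univ) ^ (p / q) * (c ^ p * ν Set.univ) := by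
        gcongr
        exact (lintegral_mono_ae hr).trans (by simp)
      _ = _ := by
        rw [ENNReal.mul_rpow_of_nonneg _ _ hp0.le, mul_left_comm, mul_comm]
        congr 1
        calc _ = ν Set.univ ^ (p / q) * ν Set.univ ^ (1 : ℝ) := by rw [ENNReal.rpow_one]
          _ = _ := by
            rw [← ENNReal.rpow_add_of_nonneg _ _ (by positivity) zero_le_one,
              hpq.div_conj_eq_sub_one, sub_add_cancel]
  unfold lpE
  calc _ ≤ _ := ENNReal.rpow_le_rpow key (by positivity)
    _ = _ := by rw [← ENNReal.rpow_mul, mul_one_div_cancel hp0.ne', ENNReal.rpow_one]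

/-- Minkowski's integral inequality with a weight `K`; the `L^p` bound is only needed where the
weight does not vanish. -/
lemma lpE_lintegral_mul_le {α β : Type*} [MeasurableSpace α] [MeasurableSpace β] (μ : Measure α)
    [SFinite μ] (ν : Measure β) [SFinite ν] {p : ℝ} (hp : 1 < p) {K : β → ℝ≥0∞} (hK : Measurable K)
    {h : β → α → ℝ≥0∞} (hm : Measurable (Function.uncurry h)) {c : ℝ≥0∞}
    (hc : ∀ r, K r ≠ 0 → lpE μ p (h r) ≤ c) :
    lpE μ p (fun x => ∫⁻ r, K r * h r x ∂ν) ≤ (∫⁻ r, K r ∂ν) * c := by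
  have h1 := lpE_lintegral_le μ (ν.withDensity K) hp hm (c := c)
    ((ae_withDensity_iff hK).2 (Filter.Eventually.of_forall hc))
  rw [withDensity_apply _ MeasurableSet.univ, Measure.restrict_univ] at h1
  convert h1 using 2
  ext x
  rw [lintegral_withDensity_eq_lintegral_mul _ hK (by fun_prop)]
  rfl

/-! ### Translation invariance on the periodic box -/

instance (L : ℝ) : SFinite (boxMeasure d L) := by unfold boxMeasure; infer_instance

/-- Integrals of periodic functions over the box are translation invariant: up to a null set the box
and its translate are both fundamental domains of the lattice `L ℤ^d`. -/
lemma lintegral_box_translate {L : ℝ} (hL : 0 < L) {φ : Euc d → ℝ≥0∞} (hφ : PeriodicF L φ)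
    (r : Euc d) : ∫⁻ x, φ (x + r) ∂boxMeasure d L = ∫⁻ x, φ x ∂boxMeasure d L := by
  let b : Module.Basis (Fin d) ℝ (Euc d) :=
    (EuclideanSpace.basisFun (Fin d) ℝ).toBasis.isUnitSMul (w := fun _ => L)
      (fun _ => isUnit_iff_ne_zero.2 hL.ne')
  have hb : ∀ i, b i = EuclideanSpace.single i L := by
    intro i
    rw [Module.Basis.isUnitSMul_apply]
    ext j
    simp
  have hrepr : ∀ x i, b.repr x i = L⁻¹ * x i := by
    intro x i
    rw [Module.Basis.repr_isUnitSMul, Units.smul_def, Units.val_inv_eq_inv_val, IsUnit.unit_spec]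
    simp
  have hbox : ZSpan.fundamentalDomain b =ᵐ[volume] box d L := by
    refine (ZSpan.fundamentalDomain_ae_parallelepiped b volume).trans (Filter.EventuallyEq.of_eq ?_)
    ext x
    rw [parallelepiped_basis_eq]
    simp only [box, hrepr, Set.mem_Icc]
    refine forall_congr' fun i => and_congr ?_ ?_
    · simp [hL]
    · rw [inv_mul_le_iff₀ hL, mul_one]
  have hinv : ∀ (g : Submodule.span ℤ (Set.range b)) (x : Euc d), φ (g +ᵥ x) = φ x := by
    rintro ⟨g, hg⟩ x
    change φ (g + x) = φ x
    induction hg using Submodule.span_induction generalizing x with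
    | mem y hy =>
      obtain ⟨i, rfl⟩ := hy
      rw [hb, add_comm]; exact hφ x i
    | zero => simp
    | add y z _ _ h1 h2 => rw [add_assoc, h1, h2]
    | smul a y _ h1 =>
      have hn : ∀ (n : ℕ) x, φ ((n : ℤ) • y + x) = φ x := by
        intro n
        induction n with
        | zero => simp
        | succ n ih => intro x; push_cast; rw [add_smul, add_assoc, ih, one_smul, h1]
      obtain ⟨n, rfl | rfl⟩ := a.eq_nat_or_neg
      · exact hn n x
      · rw [← hn n]; congr 1; simp
  have hF := ZSpan.isAddFundamentalDomain' b (volume : Measure (Euc d))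
  have hc : Countable (Submodule.span ℤ (Set.range b)).toAddSubgroup :=
    inferInstanceAs (Countable (Submodule.span ℤ (Set.range b)))
  have hF' := hF.vadd_of_comm r
  have h1 := hF.setLIntegral_eq hF' φ hinv
  have h2 := (measurePreserving_vadd r (volume : Measure (Euc d))).setLIntegral_comp_emb
    (measurableEmbedding_const_vadd r) φ (ZSpan.fundamentalDomain b)
  simp only [boxMeasure, lintegral_smul_measure, ← Measure.restrict_congr_set hbox]
  congr 1
  rw [h1]
  refine Eq.trans ?_ h2
  simp only [vadd_eq_add, add_comm]
/-! ### Derivatives of the coarse-grained field -/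

open scoped Convolution

/-- The reflected kernel `z ↦ G_ℓ(-z)`, for which `ā_ℓ` is the convolution of `a` with it. -/
def reflResc (G : Euc d → ℝ) (ℓ : ℝ) (z : Euc d) : ℝ := resc G ℓ (-z)

lemma cg_eq_convolution (G : Euc d → ℝ) (ℓ : ℝ) (a : Euc d → ℝ) :
    cg G ℓ a = a ⋆[ContinuousLinearMap.lsmul ℝ ℝ, volume] reflResc G ℓ := by
  ext x
  simp only [cg, convolution_def, reflResc]
  conv_rhs => rw [← integral_add_left_eq_self _ x]
  congr 1 with r
  simp [mul_comm]

lemma pd_convolution {a g : Euc d → ℝ} (ha : LocallyIntegrable a) (hg : ContDiff ℝ 1 g)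
    (hc : HasCompactSupport g) (i : Fin d) :
    pd i (a ⋆[ContinuousLinearMap.lsmul ℝ ℝ, volume] g) =
      a ⋆[ContinuousLinearMap.lsmul ℝ ℝ, volume] pd i g := by
  ext x
  unfold pd
  rw [(hc.hasFDerivAt_convolution_right (ContinuousLinearMap.lsmul ℝ ℝ) ha hg x).fderiv,
    convolution_precompR_apply _ ha (hc.fderiv ℝ) (hg.continuous_fderiv one_ne_zero)]

lemma contDiff_pd {g : Euc d → ℝ} (hg : ContDiff ℝ (⊤ : ℕ∞) g) (i : Fin d) :
    ContDiff ℝ (⊤ : ℕ∞) (pd i g) :=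
  (hg.fderiv_right (m := (⊤ : ℕ∞)) (by simp)).clm_apply contDiff_const

lemma hasCompactSupport_pd {g : Euc d → ℝ} (hg : HasCompactSupport g) (i : Fin d) :
    HasCompactSupport (pd i g) := hg.fderiv_apply ℝ _

lemma contDiff_lap {g : Euc d → ℝ} (hg : ContDiff ℝ (⊤ : ℕ∞) g) :
    ContDiff ℝ (⊤ : ℕ∞) (lap g) :=
  ContDiff.sum fun i _ => contDiff_pd (contDiff_pd hg i) i

lemma hasCompactSupport_lap {g : Euc d → ℝ} (hg : HasCompactSupport g) :
    HasCompactSupport (lap g) := by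
  have : ∀ s : Finset (Fin d), HasCompactSupport (fun x => ∑ i ∈ s, pd i (fun y => pd i g y) x) := by
    intro s
    induction s using Finset.induction_on with
    | empty => simpa using! HasCompactSupport.zero (α := Euc d) (β := ℝ)
    | insert i s hi ih =>
      simp only [Finset.sum_insert hi]
      exact (hasCompactSupport_pd (hasCompactSupport_pd hg i) i).add ih
  exact this _

lemma lap_convolution {a g : Euc d → ℝ} (ha : LocallyIntegrable a)
    (hg : ContDiff ℝ (⊤ : ℕ∞) g) (hc : HasCompactSupport g) :
    lap (a ⋆[ContinuousLinearMap.lsmul ℝ ℝ, volume] g) =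
      a ⋆[ContinuousLinearMap.lsmul ℝ ℝ, volume] lap g := by
  have hg1 : ContDiff ℝ 1 g := hg.of_le (by simp)
  ext x
  have h1 : ∀ i, pd i (fun y => pd i (a ⋆[ContinuousLinearMap.lsmul ℝ ℝ, volume] g) y) x =
      (a ⋆[ContinuousLinearMap.lsmul ℝ ℝ, volume] pd i (pd i g)) x := by
    intro i
    change pd i (pd i _) x = _
    rw [pd_convolution ha hg1 hc, pd_convolution ha ((contDiff_pd hg i).of_le (by simp))
      (hasCompactSupport_pd hc i)]
  simp only [lap, h1, convolution_def]
  rw [← integral_finsetSum]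
  · congr 1 with t
    simp only [ContinuousLinearMap.lsmul_apply, smul_eq_mul, Finset.mul_sum]
  · intro i _
    exact ((hasCompactSupport_pd (hasCompactSupport_pd hc i) i).convolutionExists_right
      (ContinuousLinearMap.lsmul ℝ ℝ) ha (contDiff_pd (contDiff_pd hg i) i).continuous x)

/-- All three derivatives in `∇Δ(a ⋆ g)` fall on the smooth factor `g`. -/
lemma enorm_gradient_lap_convolution_le {a g : Euc d → ℝ} (ha : LocallyIntegrable a)
    (hg : ContDiff ℝ (⊤ : ℕ∞) g) (hc : HasCompactSupport g) (x : Euc d) :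
    ‖gradient (fun y => lap (a ⋆[ContinuousLinearMap.lsmul ℝ ℝ, volume] g) y) x‖ₑ ≤
      avg (fun r => ‖fderiv ℝ (lap g) (-r)‖ₑ) (fun y => ‖a y‖ₑ) x := by
  rw [lap_convolution ha hg hc, gradient, LinearIsometryEquiv.enorm_map,
    ((hasCompactSupport_lap hc).hasFDerivAt_convolution_right (ContinuousLinearMap.lsmul ℝ ℝ) ha
      ((contDiff_lap hg).of_le (by simp)) x).fderiv, convolution_def]
  refine (enorm_integral_le_lintegral_enorm _).trans ?_
  rw [← lintegral_add_left_eq_self _ x, avg]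
  refine lintegral_mono fun r => ?_
  have : ((ContinuousLinearMap.lsmul ℝ ℝ).precompR (Euc d)) (a (x + r))
      (fderiv ℝ (lap g) (x - (x + r))) = a (x + r) • fderiv ℝ (lap g) (-r) := by
    ext y
    simp [ContinuousLinearMap.precompR_apply]
  dsimp only
  rw [this, enorm_smul, mul_comm]

lemma pd_scale (g : Euc d → ℝ) (c k : ℝ) (i : Fin d) :
    pd i (fun x => k * g (c • x)) = fun x => (k * c) * pd i g (c • x) := by
  ext x
  have : fderiv ℝ (fun x => k * g (c • x)) x = k • fderiv ℝ (fun x => g (c • x)) x := by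
    exact congrFun (fderiv_const_smul_field (f := fun x : Euc d => g (c • x)) (𝕜 := ℝ) k) x
  simp only [pd, this, smul_apply, smul_eq_mul]
  rw [fderiv_comp_smul (f := g) ]
  simp [mul_assoc]

lemma lap_scale (g : Euc d → ℝ) (c k : ℝ) :
    lap (fun x => k * g (c • x)) = fun x => (k * c * c) * lap g (c • x) := by
  ext x
  simp only [lap, Finset.mul_sum]
  refine Finset.sum_congr rfl fun i _ => ?_
  change pd i (pd i _) x = _
  rw [pd_scale, pd_scale]

lemma fderiv_lap_scale (g : Euc d → ℝ) (c k : ℝ) (x : Euc d) :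
    fderiv ℝ (lap (fun x => k * g (c • x))) x = (k * c ^ 3) • fderiv ℝ (lap g) (c • x) := by
  rw [lap_scale]
  have : fderiv ℝ (fun x => k * c * c * lap g (c • x)) x
      = (k * c * c) • fderiv ℝ (fun x => lap g (c • x)) x := by
    exact congrFun (fderiv_const_smul_field (f := fun x : Euc d => lap g (c • x)) (𝕜 := ℝ) (k * c * c)) x
  rw [this, fderiv_comp_smul (f := lap g), smul_smul]
  ring_nf

lemma lintegral_rescale {ℓ : ℝ} (hℓ : 0 < ℓ) (K : Euc d → ℝ≥0∞) (hK : Measurable K) :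
    ∫⁻ x, ENNReal.ofReal ((ℓ ^ d)⁻¹) * K (ℓ⁻¹ • x) = ∫⁻ x, K x := by
  rw [lintegral_const_mul _ (by fun_prop)]
  have h := Measure.map_addHaar_smul (volume : Measure (Euc d)) (inv_ne_zero hℓ.ne')
  have h2 : ∫⁻ x, K (ℓ⁻¹ • x) = ∫⁻ x, K x ∂(volume.map (fun x : Euc d => ℓ⁻¹ • x)) := by
    rw [lintegral_map hK (by fun_prop)]
  have h3 : (volume.map (fun x : Euc d => ℓ⁻¹ • x)) = ENNReal.ofReal (ℓ ^ d) • volume := by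
    refine h.trans ?_
    simp [abs_of_pos hℓ]
  rw [h2, h3, lintegral_smul_measure, smul_eq_mul, ← mul_assoc, ← ENNReal.ofReal_mul (by positivity),
    inv_mul_cancel₀ (by positivity)]
  simp

/-- By scaling, the kernel of `∇Δ` at scale `ℓ` has mass `ℓ^{-3}` times its mass at scale `1`. -/
lemma lintegral_fderiv_lap_reflResc (G : Euc d → ℝ) (hG : ContDiff ℝ (⊤ : ℕ∞) G) {ℓ : ℝ}
    (hℓ : 0 < ℓ) :
    ∫⁻ r, ‖fderiv ℝ (lap (reflResc G ℓ)) (-r)‖ₑ =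
      ENNReal.ofReal ((ℓ ^ 3)⁻¹) * ∫⁻ r, ‖fderiv ℝ (lap (fun z => G (-z))) r‖ₑ := by
  have hs : ContDiff ℝ (⊤ : ℕ∞) (fun z => G (-z)) := hG.comp contDiff_neg
  have hm : Measurable fun r => ‖fderiv ℝ (lap (fun z => G (-z))) r‖ₑ :=
    (((contDiff_lap hs).continuous_fderiv (by simp)).enorm).measurable
  have h1 : reflResc G ℓ = fun x => (ℓ ^ d)⁻¹ * (fun z => G (-z)) (ℓ⁻¹ • x) := by
    ext x
    simp [reflResc, resc]
  rw [lintegral_neg_eq_self (fun r => ‖fderiv ℝ (lap (reflResc G ℓ)) r‖ₑ),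
    ← lintegral_rescale hℓ _ hm, ← lintegral_const_mul _ (by fun_prop), h1]
  congr 1 with x
  rw [fderiv_lap_scale (fun z => G (-z)), enorm_smul, ← mul_assoc, ← ENNReal.ofReal_mul (by positivity),
    Real.enorm_of_nonneg (by positivity)]
  congr 2
  field_simp

lemma lintegral_resc {G : Euc d → ℝ} (hG : IsMollifier G) {ℓ : ℝ} (hℓ : 0 < ℓ) :
    ∫⁻ r, ENNReal.ofReal (resc G ℓ r) = 1 := by
  have h := lintegral_rescale hℓ (fun r => ENNReal.ofReal (G r))
    (by have := hG.smooth.continuous; fun_prop)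
  have hi : Integrable G := by
    by_contra h
    have := hG.integral_one
    rw [integral_undef h] at this
    exact zero_ne_one this
  rw [← ofReal_integral_eq_lintegral_ofReal hi (Filter.Eventually.of_forall hG.nonneg),
    hG.integral_one, ENNReal.ofReal_one] at h
  rw [← h]
  congr 1 with r
  rw [← ENNReal.ofReal_mul (by positivity)]
  rfl

/-! ### Hölder, averages over the box, and elementary properties of the mollifier -/

lemma lpE_mul_le {α : Type*} [MeasurableSpace α] (μ : Measure α) {p q r : ℝ} (hp : 0 < p)
    (hpq : p < q) (hpqr : 1 / p = 1 / q + 1 / r) {f g : α → ℝ≥0∞} (hf : Measurable f)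
    (hg : Measurable g) : lpE μ p (fun x => f x * g x) ≤ lpE μ q f * lpE μ r g :=
  ENNReal.lintegral_Lp_mul_le_Lq_mul_Lr hp hpq hpqr μ hf.aemeasurable hg.aemeasurable

lemma lpE_add_le {α : Type*} [MeasurableSpace α] (μ : Measure α) {p : ℝ} (hp : 1 ≤ p)
    {f g : α → ℝ≥0∞} (hf : Measurable f) (hg : Measurable g) :
    lpE μ p (fun x => f x + g x) ≤ lpE μ p f + lpE μ p g :=
  ENNReal.lintegral_Lp_add_le hf.aemeasurable hg.aemeasurable hp

lemma measurable_avg {K φ : Euc d → ℝ≥0∞} (hK : Measurable K) (hφ : Measurable φ) :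
    Measurable (avg K φ) := by
  have : Measurable fun z : Euc d × Euc d => K z.2 * φ (z.1 + z.2) := by fun_prop
  exact this.lintegral_prod_right'

/-- Young's inequality `‖K * φ‖_p ≤ ‖K‖_1 ‖φ‖_p` on the periodic box. -/
lemma lpE_avg_le {L : ℝ} (hL : 0 < L) {p : ℝ} (hp : 1 < p) {K φ : Euc d → ℝ≥0∞}
    (hK : Measurable K) (hφ : Measurable φ) (hper : PeriodicF L φ) :
    lpE (boxMeasure d L) p (avg K φ) ≤ (∫⁻ r, K r) * lpE (boxMeasure d L) p φ := by
  refine lpE_lintegral_mul_le (boxMeasure d L) volume hp hK (h := fun r x => φ (x + r))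
    (by unfold Function.uncurry; fun_prop) fun r _ => le_of_eq ?_
  unfold lpE
  rw [lintegral_box_translate hL (φ := fun x => φ x ^ p) fun x i => by simp only [hper x i]]

lemma resc_nonneg {G : Euc d → ℝ} (hG : IsMollifier G) {ℓ : ℝ} (hℓ : 0 < ℓ) (r : Euc d) :
    0 ≤ resc G ℓ r := mul_nonneg (by positivity) (hG.nonneg _)

lemma continuous_resc {G : Euc d → ℝ} (hG : IsMollifier G) (ℓ : ℝ) : Continuous (resc G ℓ) := by
  have := hG.smooth.continuous
  unfold resc
  fun_prop

lemma norm_le_of_resc_ne_zero {G : Euc d → ℝ} (hG : IsMollifier G) {ℓ : ℝ} (hℓ : 0 < ℓ)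
    {r : Euc d} (hr : resc G ℓ r ≠ 0) : ‖r‖ ≤ ℓ := by
  have h1 : G (ℓ⁻¹ • r) ≠ 0 := right_ne_zero_of_mul hr
  have h2 := hG.supp (subset_tsupport G h1)
  rw [mem_ball_zero_iff, norm_smul, norm_inv, Real.norm_of_nonneg hℓ.le, inv_mul_lt_iff₀ hℓ] at h2
  linarith

lemma integrable_resc {G : Euc d → ℝ} (hG : IsMollifier G) {ℓ : ℝ} (hℓ : 0 < ℓ) :
    Integrable (resc G ℓ) := by
  refine ⟨(continuous_resc hG ℓ).aestronglyMeasurable, ?_⟩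
  have : ∀ r, ‖resc G ℓ r‖ₑ = ENNReal.ofReal (resc G ℓ r) := fun r =>
    Real.enorm_of_nonneg (resc_nonneg hG hℓ r)
  simp [HasFiniteIntegral, this, lintegral_resc hG hℓ]

lemma integral_resc {G : Euc d → ℝ} (hG : IsMollifier G) {ℓ : ℝ} (hℓ : 0 < ℓ) :
    ∫ r, resc G ℓ r = 1 := by
  rw [integral_eq_lintegral_of_nonneg_ae (Filter.Eventually.of_forall (resc_nonneg hG hℓ))
    (continuous_resc hG ℓ).aestronglyMeasurable, lintegral_resc hG hℓ, ENNReal.toReal_one]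

/-! ### Coarse-grained and high-pass fields -/

section field

variable {E : Type*} [NormedAddCommGroup E] [NormedSpace ℝ E]

lemma enorm_cg_le {G : Euc d → ℝ} (hG : IsMollifier G) {ℓ : ℝ} (hℓ : 0 < ℓ) (a : Euc d → E)
    (x : Euc d) :
    ‖cg G ℓ a x‖ₑ ≤ avg (fun r => ENNReal.ofReal (resc G ℓ r)) (fun y => ‖a y‖ₑ) x := by
  refine (enorm_integral_le_lintegral_enorm _).trans (le_of_eq ?_)
  unfold avg
  congr 1 with r
  rw [enorm_smul, Real.enorm_of_nonneg (resc_nonneg hG hℓ r)]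

lemma norm_cg_le {G : Euc d → ℝ} (hG : IsMollifier G) {ℓ : ℝ} (hℓ : 0 < ℓ) {a : Euc d → E}
    {R : ℝ} (ha : ∀ y, ‖a y‖ ≤ R) (x : Euc d) : ‖cg G ℓ a x‖ ≤ R := by
  have hR : 0 ≤ R := (norm_nonneg _).trans (ha 0)
  have h : ‖cg G ℓ a x‖ₑ ≤ ENNReal.ofReal R := by
    refine (enorm_cg_le hG hℓ a x).trans ?_
    calc _ ≤ ∫⁻ r, ENNReal.ofReal (resc G ℓ r) * ENNReal.ofReal R := by
          refine lintegral_mono fun r => ?_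
          dsimp only
          gcongr
          rw [← ofReal_norm]
          exact ENNReal.ofReal_le_ofReal (ha _)
      _ = _ := by
          rw [lintegral_mul_const _ (continuous_resc hG ℓ).measurable.ennreal_ofReal,
            lintegral_resc hG hℓ, one_mul]
  rwa [← ofReal_norm, ENNReal.ofReal_le_ofReal_iff hR] at h

lemma PeriodicF.highPass {G : Euc d → ℝ} {L : ℝ} {a : Euc d → E} (ha : PeriodicF L a) (δ : ℝ) :
    PeriodicF L (highPass G δ a) := by
  intro x i
  simp only [QT.highPass, cg, ha x i]
  congr 2 with r
  rw [add_right_comm, ha]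

variable [MeasurableSpace E] [BorelSpace E] [SecondCountableTopology E]

lemma measurable_cg {G : Euc d → ℝ} (hG : IsMollifier G) (ℓ : ℝ) {a : Euc d → E}
    (ha : Measurable a) : Measurable (cg G ℓ a) := by
  have hr := (continuous_resc hG ℓ).measurable
  have : Measurable fun z : Euc d × Euc d => resc G ℓ z.2 • a (z.1 + z.2) := by fun_prop
  exact this.stronglyMeasurable.integral_prod_right'.measurable

lemma measurable_highPass {G : Euc d → ℝ} (hG : IsMollifier G) (δ : ℝ) {a : Euc d → E}
    (ha : Measurable a) : Measurable (highPass G δ a) := ha.sub (measurable_cg hG δ ha)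

/-- Since `G_δ` has mass one, `a'_δ(x) = -∫ G_δ(r) δa(r;x) dr`. -/
lemma enorm_highPass_le [CompleteSpace E] {G : Euc d → ℝ} (hG : IsMollifier G) {δ : ℝ}
    (hδ : 0 < δ) {a : Euc d → E} (ha : Measurable a) {R : ℝ} (hR : ∀ y, ‖a y‖ ≤ R) (x : Euc d) :
    ‖highPass G δ a x‖ₑ ≤ ∫⁻ r, ENNReal.ofReal (resc G δ r) * ‖incr a r x‖ₑ := by
  have hi := integrable_resc hG hδ
  have h1 : Integrable fun r => resc G δ r • a (x + r) := by
    exact hi.smul_bdd R (by fun_prop : Measurable fun r => a (x + r)).aestronglyMeasurable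
      (Filter.Eventually.of_forall fun r => hR _)
  have h2 : Integrable fun r => resc G δ r • a x := hi.smul_const _
  have h3 : highPass G δ a x = ∫ r, (resc G δ r • a x - resc G δ r • a (x + r)) := by
    rw [integral_sub h2 h1, integral_smul_const, integral_resc hG hδ, one_smul]
    rfl
  rw [h3]
  refine (enorm_integral_le_lintegral_enorm _).trans (le_of_eq ?_)
  congr 1 with r
  rw [← smul_sub, enorm_smul, Real.enorm_of_nonneg (resc_nonneg hG hδ r), incr, enorm_sub_rev]

/-- The high-pass field inherits any bound on the increments of length at most `δ`. -/
lemma lpE_highPass_le [CompleteSpace E] {G : Euc d → ℝ} (hG : IsMollifier G) {L δ p : ℝ}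
    (hδ : 0 < δ) (hp : 1 < p) {a : Euc d → E} (ha : Measurable a) {R : ℝ} (hR : ∀ y, ‖a y‖ ≤ R)
    {c : ℝ≥0∞} (hc : ∀ r : Euc d, ‖r‖ ≤ δ →
      eLpNorm (incr a r) (ENNReal.ofReal p) (boxMeasure d L) ≤ c) :
    lpE (boxMeasure d L) p (fun x => ‖highPass G δ a x‖ₑ) ≤ c := by
  have hp0 : 0 < p := by linarith
  refine (lpE_mono_ae hp0 (Filter.Eventually.of_forall (enorm_highPass_le hG hδ ha hR))).trans ?_
  refine (lpE_lintegral_mul_le (boxMeasure d L) volume hp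
    (continuous_resc hG δ).measurable.ennreal_ofReal (h := fun r x => ‖incr a r x‖ₑ) (c := c)
    (by unfold Function.uncurry incr; fun_prop) fun r hr => ?_).trans_eq ?_
  · rw [← eLpNorm_eq_lpE _ hp0]
    refine hc r (norm_le_of_resc_ne_zero hG hδ ?_)
    rintro h
    simp [h] at hr
  · rw [lintegral_resc hG hδ, one_mul]

end field

/-! ### The flux -/

lemma enorm_tauV_le {G : Euc d → ℝ} (hG : IsMollifier G) {ℓ : ℝ} (hℓ : 0 < ℓ) (f : Euc d → ℝ)
    (g : Euc d → Euc d) (x : Euc d) :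
    ‖tauV G ℓ f g x‖ₑ ≤
      avg (fun r => ENNReal.ofReal (resc G ℓ r)) (fun y => ‖f y‖ₑ * ‖g y‖ₑ) x +
      avg (fun r => ENNReal.ofReal (resc G ℓ r)) (fun y => ‖f y‖ₑ) x *
        avg (fun r => ENNReal.ofReal (resc G ℓ r)) (fun y => ‖g y‖ₑ) x := by
  refine enorm_sub_le.trans (add_le_add ?_ ?_)
  · simpa only [enorm_smul] using enorm_cg_le hG hℓ (fun y => f y • g y) x
  · rw [enorm_smul]
    exact mul_le_mul' (enorm_cg_le hG hℓ f x) (enorm_cg_le hG hℓ g x)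

lemma enorm_gradient_lap_cg_le {G : Euc d → ℝ} (hG : IsMollifier G) {ℓ : ℝ} (hℓ : 0 < ℓ)
    {a : Euc d → ℝ} (ha : LocallyIntegrable a) (x : Euc d) :
    ‖gradient (fun y => lap (cg G ℓ a) y) x‖ₑ ≤
      avg (fun r => ‖fderiv ℝ (lap (reflResc G ℓ)) (-r)‖ₑ) (fun y => ‖a y‖ₑ) x := by
  have hs : ContDiff ℝ (⊤ : ℕ∞) (reflResc G ℓ) :=
    contDiff_const.mul (hG.smooth.comp (contDiff_neg.const_smul _))
  have hc : HasCompactSupport (reflResc G ℓ) := by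
    refine HasCompactSupport.of_support_subset_isCompact (isCompact_closedBall (0 : Euc d) ℓ) ?_
    intro z hz
    rw [mem_closedBall_zero_iff, ← norm_neg]
    exact norm_le_of_resc_ne_zero hG hℓ hz
  rw [cg_eq_convolution]
  exact enorm_gradient_lap_convolution_le ha hs hc x

lemma enorm_uvFlux_le (G : Euc d → ℝ) {ℓ δ hb m M : ℝ} (hM : 0 < M) (ρ : Euc d → ℝ)
    (v : Euc d → Euc d) (x : Euc d) (hx : 1 / M ≤ cg G ℓ ρ x) :
    ‖uvFlux G ℓ δ hb m ρ v x‖ₑ ≤ ENNReal.ofReal (hb ^ 2 / (4 * m ^ 2) * M) *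
      (‖gradient (fun y => lap (cg G ℓ (highPass G δ ρ)) y) x‖ₑ *
        ‖tauV G ℓ (highPass G δ ρ) (highPass G δ v) x‖ₑ) := by
  have hpos : 0 < cg G ℓ ρ x := (by positivity : 0 < 1 / M).trans_le hx
  have h1 : (cg G ℓ ρ x)⁻¹ ≤ M := by
    rw [inv_le_comm₀ hpos hM]; simpa using hx
  rw [uvFlux, enorm_neg, enorm_mul, Real.enorm_of_nonneg (by positivity)]
  gcongr
  rw [← ofReal_norm, ← ofReal_norm, ← ofReal_norm, ← ENNReal.ofReal_mul (norm_nonneg _)]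
  exact ENNReal.ofReal_le_ofReal (norm_inner_le_norm _ _)

lemma ae_boxMeasure {L : ℝ} {P : Euc d → Prop} (h : ∀ᵐ x, P x) : ∀ᵐ x ∂boxMeasure d L, P x :=
  (Measure.smul_absolutelyContinuous.trans Measure.restrict_le_self.absolutelyContinuous).ae_le h

end QT

open QT in
/-- ultraviolet locality of the quantum baropycnal work,
`‖Z_ℓ‖_{p/3} ≤ C (ħ²/m²) M A B² ℓ^{−3} (δ/L)^{2+σ}`, with `C` depending only on `G, d`. -/
theorem eLpNorm_uvFlux_le {d : ℕ} (hd : 1 ≤ d)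
    (G : Euc d → ℝ) (hG : IsMollifier G) :
    ∃ C > 0, ∀ (hb m 𝓛 : ℝ), 0 < hb → 0 < m → 0 < 𝓛 →
      ∀ (ρ : Euc d → ℝ) (v : Euc d → Euc d) (R Cv : ℝ),
      Measurable ρ → (∀ y, 0 ≤ ρ y) → (∀ y, ρ y ≤ R) → PeriodicF 𝓛 ρ →
      Measurable v → (∀ y, ‖v y‖ ≤ Cv) → PeriodicF 𝓛 v →
      ∀ (p σ δ ℓ A B L M : ℝ), 3 ≤ p → σ ∈ Set.Ioc (0 : ℝ) 1 → 0 < δ → δ ≤ ℓ →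
      0 < A → 0 < B → 0 < L → 0 < M →
      (∀ r : Euc d, ‖r‖ ≤ δ →
        eLpNorm (incr ρ r) (ENNReal.ofReal p) (boxMeasure d 𝓛) ≤
          ENNReal.ofReal (B * ‖r‖ / L)) →
      (∀ r : Euc d, ‖r‖ ≤ δ →
        eLpNorm (incr v r) (ENNReal.ofReal p) (boxMeasure d 𝓛) ≤
          ENNReal.ofReal (A * (‖r‖ / L) ^ σ)) →
      (∀ᵐ x : Euc d, 1 / M ≤ cg G ℓ ρ x) →
      eLpNorm (fun x => uvFlux G ℓ δ hb m ρ v x) (ENNReal.ofReal (p / 3))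
          (boxMeasure d 𝓛) ≤
        ENNReal.ofReal (C * (hb ^ 2 / m ^ 2) * M * A * B ^ 2 * (ℓ ^ 3)⁻¹ *
          (δ / L) ^ (2 + σ)) := by
  set I : ℝ≥0∞ := ∫⁻ r, ‖fderiv ℝ (lap (fun z => G (-z))) r‖ₑ with hI
  have hIfin : I ≠ ⊤ := by
    have hs : ContDiff ℝ (⊤ : ℕ∞) (fun z => G (-z)) := hG.smooth.comp contDiff_neg
    have hc : HasCompactSupport (fun z => G (-z)) := by
      refine HasCompactSupport.of_support_subset_isCompact (isCompact_closedBall (0 : Euc d) 1) ?_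
      intro z hz
      have := ball_subset_closedBall (hG.supp (subset_tsupport G hz))
      simpa using this
    exact (((contDiff_lap hs).continuous_fderiv (by simp)).integrable_of_hasCompactSupport
      (μ := volume) ((hasCompactSupport_lap hc).fderiv ℝ)).2.ne
  -- The argument produces the constant `I / 2`; the extra `1` makes `C` positive.
  refine ⟨I.toReal + 1, by positivity, ?_⟩
  intro hb m 𝓛 hhb hm h𝓛 ρ v R Cv hρm hρ0 hρR hρp hvm hvC hvp p σ δ ℓ A B L M hp hσ hδ hδℓ hA hB hL
    hM hincρ hincv hlow
  have hℓ : 0 < ℓ := hδ.trans_le hδℓ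
  have hρn : ∀ y, ‖ρ y‖ ≤ R := fun y => by rw [Real.norm_of_nonneg (hρ0 y)]; exact hρR y
  set μ := boxMeasure d 𝓛
  set K : Euc d → ℝ≥0∞ := fun r => ENNReal.ofReal (resc G ℓ r)
  have hK : Measurable K := (continuous_resc hG ℓ).measurable.ennreal_ofReal
  have hK1 : ∫⁻ r, K r = 1 := lintegral_resc hG hℓ
  set f := highPass G δ ρ with hf
  set g := highPass G δ v with hg
  have hfm : Measurable f := measurable_highPass hG δ hρm
  have hgm : Measurable g := measurable_highPass hG δ hvm
  have hfp : PeriodicF 𝓛 f := hρp.highPass δ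
  have hgp : PeriodicF 𝓛 g := hvp.highPass δ
  set F : Euc d → ℝ≥0∞ := fun y => ‖f y‖ₑ
  set Γ : Euc d → ℝ≥0∞ := fun y => ‖g y‖ₑ
  have hFm : Measurable F := hfm.enorm
  have hΓm : Measurable Γ := hgm.enorm
  have hFp : PeriodicF 𝓛 F := fun x i => by simp only [F, hfp x i]
  have hΓp : PeriodicF 𝓛 Γ := fun x i => by simp only [Γ, hgp x i]
  have hfloc : LocallyIntegrable f := by
    refine (memLp_top_of_bound hfm.aestronglyMeasurable (R + R)
      (Filter.Eventually.of_forall fun x => ?_)).locallyIntegrable le_top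
    exact (norm_sub_le _ _).trans (add_le_add (hρn x) (norm_cg_le hG hδ hρn x))
  have hF : lpE μ p F ≤ ENNReal.ofReal (B * δ / L) := by
    refine lpE_highPass_le hG hδ (by linarith) hρm hρn fun r hr => (hincρ r hr).trans ?_
    gcongr
  have hΓ : lpE μ p Γ ≤ ENNReal.ofReal (A * (δ / L) ^ σ) := by
    refine lpE_highPass_le hG hδ (by linarith) hvm hvC fun r hr => (hincv r hr).trans ?_
    have := hσ.1.le
    gcongr
  set H : Euc d → ℝ≥0∞ := fun r => ‖fderiv ℝ (lap (reflResc G ℓ)) (-r)‖ₑ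
  have hH : Measurable H :=
    ((measurable_fderiv ℝ (lap (reflResc G ℓ))).comp measurable_neg).enorm
  have hH1 : ∫⁻ r, H r = ENNReal.ofReal ((ℓ ^ 3)⁻¹) * I := lintegral_fderiv_lap_reflResc G hG.smooth hℓ
  set Φ := avg H F
  set Ψ : Euc d → ℝ≥0∞ := fun x => avg K (fun y => F y * Γ y) x + avg K F x * avg K Γ x
  have hΦm : Measurable Φ := measurable_avg hH hFm
  have hKF := measurable_avg hK hFm
  have hKΓ := measurable_avg hK hΓm
  have hKFΓ := measurable_avg hK (hFm.mul hΓm)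
  have hΨm : Measurable Ψ := hKFΓ.add (hKF.mul hKΓ)
  set k := ENNReal.ofReal (hb ^ 2 / (4 * m ^ 2) * M)
  have hpt : ∀ᵐ x ∂μ, ‖uvFlux G ℓ δ hb m ρ v x‖ₑ ≤ k * (Φ x * Ψ x) := by
    filter_upwards [ae_boxMeasure hlow] with x hx
    refine (enorm_uvFlux_le G hM ρ v x hx).trans ?_
    gcongr
    · exact enorm_gradient_lap_cg_le hG hℓ hfloc x
    · exact enorm_tauV_le hG hℓ f g x
  have hΦ : lpE μ p Φ ≤ ENNReal.ofReal ((ℓ ^ 3)⁻¹) * I * ENNReal.ofReal (B * δ / L) := by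
    refine (lpE_avg_le h𝓛 (by linarith) hH hFm hFp).trans ?_
    rw [hH1]
    gcongr
  -- Hölder with exponents `p, p` into `p/2`, which is still at least one because `p ≥ 3`.
  have hhol : 1 / (p / 2) = 1 / p + 1 / p := by field_simp; norm_num
  have hΨ : lpE μ (p / 2) Ψ ≤
      2 * (ENNReal.ofReal (B * δ / L) * ENNReal.ofReal (A * (δ / L) ^ σ)) := by
    refine (lpE_add_le μ (by linarith) hKFΓ (hKF.mul hKΓ)).trans ?_
    rw [two_mul]
    refine add_le_add ?_ ?_
    · refine (lpE_avg_le h𝓛 (by linarith) hK (hFm.mul hΓm)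
        fun x i => by simp only [Pi.mul_apply, hFp x i, hΓp x i]).trans ?_
      rw [hK1, one_mul]
      exact (lpE_mul_le μ (by linarith) (by linarith) hhol hFm hΓm).trans (mul_le_mul' hF hΓ)
    · refine (lpE_mul_le μ (by linarith) (by linarith) hhol hKF hKΓ).trans (mul_le_mul' ?_ ?_)
      · refine (lpE_avg_le h𝓛 (by linarith) hK hFm hFp).trans ?_
        rwa [hK1, one_mul]
      · refine (lpE_avg_le h𝓛 (by linarith) hK hΓm hΓp).trans ?_
        rwa [hK1, one_mul]
  have hp3 : 0 < p / 3 := by linarith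
  rw [eLpNorm_eq_lpE μ hp3]
  calc _ ≤ lpE μ (p / 3) (fun x => k * (Φ x * Ψ x)) := lpE_mono_ae hp3 hpt
    _ = k * lpE μ (p / 3) (fun x => Φ x * Ψ x) := lpE_const_mul μ hp3 k (hΦm.mul hΨm)
    _ ≤ k * (lpE μ p Φ * lpE μ (p / 2) Ψ) := by
      gcongr
      exact lpE_mul_le μ hp3 (by linarith) (by field_simp; norm_num) hΦm hΨm
    _ ≤ k * ((ENNReal.ofReal ((ℓ ^ 3)⁻¹) * I * ENNReal.ofReal (B * δ / L)) *
        (2 * (ENNReal.ofReal (B * δ / L) * ENNReal.ofReal (A * (δ / L) ^ σ)))) := by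
      gcongr
    _ = ENNReal.ofReal (hb ^ 2 / (4 * m ^ 2) * M * (((ℓ ^ 3)⁻¹ * I.toReal * (B * δ / L)) *
        (2 * ((B * δ / L) * (A * (δ / L) ^ σ))))) := by
      rw [← ENNReal.ofReal_toReal hIfin, ← ENNReal.ofReal_ofNat 2]
      simp only [k]
      rw [← ENNReal.ofReal_mul (by positivity), ← ENNReal.ofReal_mul (by positivity),
        ← ENNReal.ofReal_mul (by positivity), ← ENNReal.ofReal_mul (by positivity),
        ← ENNReal.ofReal_mul (by positivity), ← ENNReal.ofReal_mul (by positivity),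
        ENNReal.toReal_ofReal ENNReal.toReal_nonneg]
    _ ≤ _ := by
      apply ENNReal.ofReal_le_ofReal
      rw [Real.rpow_add (by positivity), Real.rpow_two]
      have e1 : hb ^ 2 / (4 * m ^ 2) * M * (((ℓ ^ 3)⁻¹ * I.toReal * (B * δ / L)) *
          (2 * ((B * δ / L) * (A * (δ / L) ^ σ)))) = (I.toReal / 2) * (hb ^ 2 / m ^ 2) * M * A *
            B ^ 2 * (ℓ ^ 3)⁻¹ * ((δ / L) ^ 2 * (δ / L) ^ σ) := by
        field_simp
        ring
      rw [e1]
      have : I.toReal / 2 ≤ I.toReal + 1 := by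
        linarith [ENNReal.toReal_nonneg (a := I)]
      gcongr
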